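/- Suppose q ≥ 5. Then the dual code C_{(1,q+1,q^2)}^⊥ is a (q−2)-weight code: the set of Hamming weights of its nonzero codewords is exactly {4, 5, …, q+1} (every nonzero codeword has weight at least 4, and for every integer j with 4 ≤ j ≤ q+1 there exists a codeword of weight j). -/

import Mathlib

open scoped Classical

/-- The number of indices `i` (with `0 ≤ i ≤ q`) where `V i = s`. -/
noncomputable def occr {n : ℕ} {F : Type} (s : F) (V : Fin n → F) : ℕ :=
  (Finset.filter (fun i => V i = s) Finset.univ).card

/-- The Hamming weight of a vector: the number of its nonzero entries. -/
noncomputable def hwt {n : ℕ} {F : Type} [Zero F] (V : Fin n → F) : ℕ :=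
  (Finset.filter (fun i => V i ≠ 0) Finset.univ).card

/-- The codeword `c(β) = (Tr(β·γ^{(q−1)i}))_{i=0}^{q}` of the irreducible cyclic code
`C_{(q+1,q²)}`. -/
noncomputable def cw (q : ℕ) (F : Type) {K : Type} [Field F] [Field K] [Algebra F K]
    (γ : Kˣ) (β : K) : Fin (q + 1) → F :=
  fun i => Algebra.trace F K (β * (γ : K) ^ (((q : ℤ) - 1) * ((i : ℕ) : ℤ)))

/-- The cyclic code `C_{(1,q+1,q²)} ⊆ F_q^{q+1}`, consisting of the vectors
`c(α,β)_i = α + Tr(β·γ^{(q−1)i})` for `α ∈ F_q`, `β ∈ F_{q²}`. -/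
noncomputable def code (q : ℕ) (F : Type) {K : Type} [Field F] [Fintype F] [Field K]
    [Fintype K] [Algebra F K] (γ : Kˣ) : Finset (Fin (q + 1) → F) :=
  Finset.image (fun p : F × K => fun i : Fin (q + 1) => p.1 + cw q F γ p.2 i) Finset.univ

/-- The dual code `C_{(1,q+1,q²)}^⊥ = {v ∈ F_q^{q+1} : ∑ i, v i · c i = 0 for all
`c ∈ C_{(1,q+1,q²)}`}`. -/
noncomputable def dualCode (q : ℕ) (F : Type) {K : Type} [Field F] [Fintype F] [Field K]
    [Fintype K] [Algebra F K] (γ : Kˣ) : Finset (Fin (q + 1) → F) :=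
  Finset.filter (fun v => ∀ c ∈ code q F γ, ∑ i, v i * c i = 0) Finset.univ

/-!
The code has columns `(1, xᵢ)` in the three-dimensional `F_q`-space `F_q × F_{q²}`, where the `xᵢ`
are the `(q+1)`-th roots of unity, and by nondegeneracy of the trace form its dual consists of the
`F_q`-linear relations `∑ vᵢ (1, xᵢ) = 0` between them. Applying the Frobenius to `∑ vᵢ xᵢ = 0`
gives `∑ vᵢ xᵢ⁻¹ = 0`, so the moments of exponent `-1, 0, 1` vanish, and by Vandermonde any three
columns are independent. Hence the dual code is MDS of minimum distance `4`.

An MDS code of minimum distance `d` has a codeword supported on exactly any prescribed set of `d`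
coordinates. If the field has more than `d` elements, larger supports follow one coordinate at a
time: a generic multiple of a minimum weight codeword that meets the old support in `d - 1`
coordinates can be added without cancelling any entry.
-/

section Support

variable {ι F : Type*} [DivisionRing F]

theorem exists_support_add_smul_eq_union {v w : ι → F}
    (h : (Function.support v ∩ Function.support w).encard + 1 < ENat.card F) :
    ∃ t : F, Function.support (v + t • w) = Function.support v ∪ Function.support w := by
  let ratios : Set F := (fun i ↦ -v i / w i) '' (Function.support v ∩ Function.support w)
  have hlt : (insert 0 ratios).encard < ENat.card F :=
    calc (insert 0 ratios).encard ≤ ratios.encard + 1 := Set.encard_insert_le _ _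
      _ ≤ (Function.support v ∩ Function.support w).encard + 1 := by
        gcongr
        exact Set.encard_image_le _ _
      _ < ENat.card F := h
  have hne : insert 0 ratios ≠ Set.univ := fun heq ↦ hlt.ne (by rw [heq, Set.encard_univ])
  obtain ⟨t, ht⟩ := (Set.ne_univ_iff_exists_notMem _).1 hne
  simp only [ratios, Set.mem_insert_iff, Set.mem_image, Set.mem_inter_iff, Function.mem_support,
    not_or, not_exists, not_and] at ht
  obtain ⟨ht0, ht⟩ := ht
  refine ⟨t, Set.ext fun i ↦ ?_⟩
  simp only [Function.mem_support, Pi.add_apply, Pi.smul_apply, smul_eq_mul, Set.mem_union]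
  by_cases hv : v i = 0
  · simp [hv, ht0]
  by_cases hw : w i = 0
  · simp [hv, hw]
  have hcancel : v i + t * w i ≠ 0 := fun h0 ↦
    ht i ⟨hv, hw⟩ <| (div_eq_iff hw).2 (neg_eq_of_add_eq_zero_right h0)
  simp [hv, hcancel]

variable [Fintype ι]

theorem exists_mem_ne_zero_support_subset {C : Submodule F (ι → F)} {s : Finset ι}
    (h : Fintype.card ι < Module.finrank F C + s.card) :
    ∃ v ∈ C, v ≠ 0 ∧ Function.support v ⊆ s := by
  let restrict : C →ₗ[F] ({i // i ∉ s} → F) := LinearMap.funLeft F F Subtype.val ∘ₗ C.subtype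
  have hrank : Module.finrank F ({i // i ∉ s} → F) < Module.finrank F C := by
    rw [Module.finrank_fintype_fun_eq_card, Fintype.card_subtype_compl, Fintype.card_coe]
    have := s.card_le_univ
    omega
  obtain ⟨⟨v, hvC⟩, hker, hne⟩ :=
    (Submodule.ne_bot_iff _).1 (LinearMap.ker_ne_bot_of_finrank_lt (f := restrict) hrank)
  refine ⟨v, hvC, by simpa using hne, fun i hi ↦ ?_⟩
  by_contra his
  exact hi (congrFun hker ⟨i, his⟩)

variable [DecidableEq F]

theorem hammingNorm_eq_card_of_support_eq {v : ι → F} {s : Finset ι}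
    (h : Function.support v = s) : hammingNorm v = s.card :=
  congrArg Finset.card <| Finset.ext fun i ↦ by simpa using Set.ext_iff.1 h i

theorem support_eq_of_support_subset_of_card_le_hammingNorm {v : ι → F} {s : Finset ι}
    (hsub : Function.support v ⊆ s) (hcard : s.card ≤ hammingNorm v) :
    Function.support v = s := by
  have heq : Finset.univ.filter (fun i ↦ v i ≠ 0) = s :=
    Finset.eq_of_subset_of_card_le (fun i hi ↦ hsub (by simpa using hi)) hcard
  rw [← heq]
  ext i
  simp

end Support

section MDS

variable {ι F : Type*} [Fintype ι] [DivisionRing F] [DecidableEq F]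

/-- Maximum distance separable linear codes of length `card ι` and minimum distance `d`. By the
Singleton bound, a nonzero code of minimum distance at least `d` has dimension at most
`card ι + 1 - d`, so the inequality `card_lt` says that the bound is attained. The zero code is
admitted for every `d > card ι`. -/
structure IsMDS (C : Submodule F (ι → F)) (d : ℕ) : Prop where
  le_hammingNorm : ∀ v ∈ C, v ≠ 0 → d ≤ hammingNorm v
  card_lt : Fintype.card ι < Module.finrank F C + d

namespace IsMDS

variable {C : Submodule F (ι → F)} {d : ℕ}

theorem one_le (hC : IsMDS C d) : 1 ≤ d := by
  have := hC.card_lt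
  have := C.finrank_le
  rw [Module.finrank_fintype_fun_eq_card] at this
  omega

theorem exists_mem_support_eq_of_card_eq (hC : IsMDS C d) {s : Finset ι} (hs : s.card = d) :
    ∃ v ∈ C, Function.support v = s := by
  obtain ⟨v, hvC, hv, hsub⟩ := exists_mem_ne_zero_support_subset (hs ▸ hC.card_lt)
  exact ⟨v, hvC, support_eq_of_support_subset_of_card_le_hammingNorm hsub
    (hs ▸ hC.le_hammingNorm v hvC hv)⟩

theorem exists_mem_support_eq (hC : IsMDS C d) (hF : d < ENat.card F) {s : Finset ι}
    (hs : d ≤ s.card) : ∃ v ∈ C, Function.support v = s := by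
  classical
  induction s using Finset.induction_on with
  | empty => exact hC.exists_mem_support_eq_of_card_eq (hs.antisymm' (Nat.zero_le d))
  | insert p s hp ih =>
    obtain heq | hlt := hs.eq_or_lt
    · exact hC.exists_mem_support_eq_of_card_eq heq.symm
    rw [Finset.card_insert_of_notMem hp] at hlt
    obtain ⟨v, hvC, hv⟩ := ih (by omega)
    obtain ⟨r, hrs, hr⟩ := Finset.exists_subset_card_eq (s := s) (n := d - 1) (by omega)
    have hd : r.card + 1 = d := hr ▸ Nat.sub_add_cancel hC.one_le
    obtain ⟨w, hwC, hw⟩ := hC.exists_mem_support_eq_of_card_eq (s := insert p r)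
      (by rw [Finset.card_insert_of_notMem (fun h ↦ hp (hrs h)), hd])
    have hinter : Function.support v ∩ Function.support w = r := by
      rw [hv, hw, ← Finset.coe_inter, Finset.inter_insert_of_notMem hp,
        Finset.inter_eq_right.2 hrs]
    obtain ⟨t, ht⟩ := exists_support_add_smul_eq_union (v := v) (w := w) (by
      rw [hinter, Set.encard_coe_eq_coe_finsetCard]
      exact_mod_cast hd ▸ hF)
    refine ⟨v + t • w, C.add_mem hvC (C.smul_mem t hwC), ?_⟩
    rw [ht, hv, hw, ← Finset.coe_union, Finset.union_insert, Finset.union_eq_left.2 hrs]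

theorem setOf_hammingNorm_eq_Icc (hC : IsMDS C d) (hF : d < ENat.card F) :
    {n | ∃ v ∈ C, v ≠ 0 ∧ hammingNorm v = n} = Set.Icc d (Fintype.card ι) := by
  refine Set.Subset.antisymm ?_ fun n ⟨hdn, hn⟩ ↦ ?_
  · rintro _ ⟨v, hvC, hv, rfl⟩
    exact ⟨hC.le_hammingNorm v hvC hv, hammingNorm_le_card_fintype⟩
  · obtain ⟨s, -, rfl⟩ := Finset.exists_subset_card_eq (s := (Finset.univ : Finset ι)) hn
    obtain ⟨v, hvC, hv⟩ := hC.exists_mem_support_eq hF hdn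
    have hnorm := hammingNorm_eq_card_of_support_eq hv
    exact ⟨v, hvC, hammingNorm_pos_iff.1 (hnorm ▸ hC.one_le.trans hdn), hnorm⟩

end IsMDS

theorem isMDS_ker_linearCombination {M : Type*} [AddCommGroup M] [Module F M]
    [FiniteDimensional F M] {y : ι → M}
    (hy : ∀ s : Finset ι, s.card ≤ Module.finrank F M → LinearIndepOn F y s) :
    IsMDS (LinearMap.ker (Fintype.linearCombination F y)) (Module.finrank F M + 1) where
  le_hammingNorm v hv hne := by
    by_contra! hlt
    set s := Finset.univ.filter (fun i ↦ v i ≠ 0) with hs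
    have hsum : ∑ i ∈ s, v i • y i = 0 := by
      rw [LinearMap.mem_ker, Fintype.linearCombination_apply] at hv
      rw [← hv, hs]
      refine Finset.sum_filter_of_ne fun i _ hi h0 ↦ hi ?_
      rw [h0, zero_smul]
    have hzero := linearIndepOn_finset_iff.1 (hy s (Nat.lt_succ_iff.1 hlt)) v hsum
    refine hne (funext fun i ↦ ?_)
    by_contra hi
    exact hi (hzero i (by simpa [hs] using hi))
  card_lt := by
    have hrn := (Fintype.linearCombination F y).finrank_range_add_finrank_ker
    have hrange := (LinearMap.range (Fintype.linearCombination F y)).finrank_le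
    rw [Module.finrank_fintype_fun_eq_card] at hrn
    omega

end MDS

section TraceDual

variable {F K : Type*} [Field F] [Field K] [Algebra F K]

theorem forall_sum_mul_add_trace_eq_zero_iff [FiniteDimensional F K] [Algebra.IsSeparable F K]
    {ι : Type*} [Fintype ι] (x : ι → K) (v : ι → F) :
    (∀ (α : F) (β : K), ∑ i, v i * (α + Algebra.trace F K (β * x i)) = 0) ↔
      v ∈ LinearMap.ker (Fintype.linearCombination F fun i ↦ ((1 : F), x i)) := by
  have hpairing (α : F) (β : K) : ∑ i, v i * (α + Algebra.trace F K (β * x i)) =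
      α * ∑ i, v i + Algebra.trace F K (β * ∑ i, v i • x i) := by
    simp only [mul_add, Finset.sum_add_distrib, ← Finset.sum_mul, mul_comm α, Finset.mul_sum,
      map_sum, mul_smul_comm, map_smul, smul_eq_mul]
  have hker : v ∈ LinearMap.ker (Fintype.linearCombination F fun i ↦ ((1 : F), x i)) ↔
      ∑ i, v i = 0 ∧ ∑ i, v i • x i = 0 := by
    simp [Fintype.linearCombination_apply, Prod.ext_iff, Prod.fst_sum, Prod.snd_sum]
  simp only [hpairing, hker]
  refine ⟨fun h ↦ ⟨by simpa using h 1 0, ?_⟩, fun ⟨h0, h1⟩ α β ↦ by simp [h0, h1]⟩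
  refine (traceForm_nondegenerate F K).2 _ fun β ↦ ?_
  simpa only [Algebra.traceForm_apply, zero_mul, zero_add] using h 0 β

end TraceDual

section RootsOfUnity

variable {F K : Type*} [Field F] [Fintype F] [Field K] [Algebra F K]

theorem sum_smul_inv_eq_zero {ι : Type*} [Fintype ι] {x : ι → K}
    (hx : ∀ i, x i ^ (Fintype.card F + 1) = 1) {c : ι → F} (hc : ∑ i, c i • x i = 0) :
    ∑ i, c i • (x i)⁻¹ = 0 := by
  have hinv (i : ι) : x i ^ Fintype.card F = (x i)⁻¹ :=
    eq_inv_of_mul_eq_one_left (by rw [← pow_succ, hx i])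
  simpa [hinv] using congrArg (FiniteField.frobeniusAlgHom F K) hc

theorem linearIndependent_one_prod_of_pow_eq_one {n : ℕ} (hn : n ≤ 3) {x : Fin n → K}
    (hinj : Function.Injective x) (hx : ∀ i, x i ^ (Fintype.card F + 1) = 1) :
    LinearIndependent F fun i ↦ ((1 : F), x i) := by
  refine Fintype.linearIndependent_iff.2 fun c hc ↦ ?_
  have hx0 (i : Fin n) : x i ≠ 0 := by
    intro h
    simpa [h] using hx i
  have h₀ : ∑ i, algebraMap F K (c i) = 0 := by
    simpa [Prod.fst_sum] using congrArg (fun z ↦ algebraMap F K z.1) hc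
  have h₁ : ∑ i, c i • x i = 0 := by simpa [Prod.snd_sum] using congrArg Prod.snd hc
  have hneg := sum_smul_inv_eq_zero hx h₁
  have hmoments (k : Fin n) : ∑ i, c i • (x i)⁻¹ * x i ^ (k : ℕ) = 0 := by
    obtain ⟨k, hk⟩ := k
    have hk3 : k < 3 := hk.trans_le hn
    interval_cases k
    · simpa using hneg
    · simpa [hx0, Algebra.smul_def] using h₀
    · simpa [hx0, pow_two] using h₁
  have hzero := Matrix.eq_zero_of_forall_pow_sum_mul_pow_eq_zero hinj hmoments
  intro i
  simpa [hx0] using congrFun hzero i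

theorem linearIndepOn_one_prod_of_pow_eq_one {ι : Type*} {x : ι → K}
    (hinj : Function.Injective x) (hx : ∀ i, x i ^ (Fintype.card F + 1) = 1) {s : Finset ι}
    (hs : s.card ≤ 3) : LinearIndepOn F (fun i ↦ ((1 : F), x i)) (s : Set ι) :=
  (linearIndependent_equiv s.equivFin.symm).1 <|
    linearIndependent_one_prod_of_pow_eq_one hs
      (hinj.comp (Subtype.val_injective.comp s.equivFin.symm.injective)) fun _ ↦ hx _

theorem isMDS_ker_linearCombination_one_prod [DecidableEq F] {ι : Type*} [Fintype ι]
    (hK : Module.finrank F K = 2) {x : ι → K} (hinj : Function.Injective x)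
    (hx : ∀ i, x i ^ (Fintype.card F + 1) = 1) :
    IsMDS (LinearMap.ker (Fintype.linearCombination F fun i ↦ ((1 : F), x i))) 4 := by
  have : FiniteDimensional F K := Module.finite_of_finrank_eq_succ hK
  have hrank : Module.finrank F (F × K) = 3 := by simp [hK]
  have hmds := isMDS_ker_linearCombination (F := F) (y := fun i ↦ ((1 : F), x i))
    fun s hs ↦ linearIndepOn_one_prod_of_pow_eq_one hinj hx (hrank ▸ hs)
  rwa [hrank] at hmds

end RootsOfUnity

theorem isPrimitiveRoot_zpow_sub_one {q : ℕ} {K : Type*} [Field K] [Fintype K]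
    (hK : Fintype.card K = q ^ 2) {γ : Kˣ} (hγ : ∀ x : Kˣ, x ∈ Subgroup.zpowers γ) :
    IsPrimitiveRoot ((γ : K) ^ ((q : ℤ) - 1)) (q + 1) := by
  obtain ⟨m, rfl⟩ : ∃ m, q = m + 1 := Nat.exists_eq_succ_of_ne_zero fun h ↦ by
    simp [h] at hK
  have horder : orderOf γ = m * (m + 1 + 1) := by
    rw [orderOf_eq_card_of_forall_mem_zpowers hγ, Nat.card_units, Nat.card_eq_fintype_card, hK]
    exact Nat.sub_eq_of_eq_add (by ring)
  have hroot := (IsPrimitiveRoot.orderOf γ).pow (orderOf_pos γ) horder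
  simpa using IsPrimitiveRoot.coe_units_iff.2 hroot

section DualCode

theorem hwt_eq_hammingNorm {n : ℕ} {F : Type} [Zero F] (v : Fin n → F) : hwt v = hammingNorm v :=
  rfl

variable {q : ℕ} {F K : Type} [Field F] [Field K] [Algebra F K]

theorem cw_apply (γ : Kˣ) (β : K) (i : Fin (q + 1)) :
    cw q F γ β i = Algebra.trace F K (β * ((γ : K) ^ ((q : ℤ) - 1)) ^ (i : ℕ)) := by
  rw [cw, zpow_mul, zpow_natCast]

theorem mem_dualCode_iff [Fintype F] [Fintype K] (γ : Kˣ) (v : Fin (q + 1) → F) :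
    v ∈ dualCode q F γ ↔ v ∈ LinearMap.ker (Fintype.linearCombination F
      fun i : Fin (q + 1) ↦ ((1 : F), ((γ : K) ^ ((q : ℤ) - 1)) ^ (i : ℕ))) := by
  rw [← forall_sum_mul_add_trace_eq_zero_iff]
  simp [dualCode, code, cw_apply, @forall_comm (Fin (q + 1) → F)]

end DualCode

/-- For `q ≥ 5`, the dual code `C_{(1,q+1,q²)}^⊥` is a `(q−2)`-weight code: the set of
Hamming weights of its nonzero codewords is exactly `{4, 5, …, q+1}`. -/
theorem dual_code_weights_Icc
    (q : ℕ) (F K : Type) [Field F] [Fintype F] [Field K] [Fintype K] [Algebra F K]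
    (hF : Fintype.card F = q) (hK : Fintype.card K = q ^ 2)
    (γ : Kˣ) (hγ : ∀ x : Kˣ, x ∈ Subgroup.zpowers γ)
    (htr : ∀ x : K, algebraMap F K (Algebra.trace F K x) = x + x ^ q)
    (hq5 : 5 ≤ q) :
    {w : ℕ | ∃ v ∈ dualCode q F γ, v ≠ 0 ∧ hwt v = w} = Set.Icc 4 (q + 1) := by
  have hrank : Module.finrank F K = 2 := by
    have hcard := Module.card_eq_pow_finrank (K := F) (V := K)
    rw [hF, hK] at hcard
    exact (Nat.pow_right_injective (by omega) hcard).symm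
  have hζ := isPrimitiveRoot_zpow_sub_one hK hγ
  have hmds := isMDS_ker_linearCombination_one_prod hrank
    (x := fun i : Fin (q + 1) ↦ ((γ : K) ^ ((q : ℤ) - 1)) ^ (i : ℕ))
    (fun i j hij ↦ Fin.ext (hζ.pow_inj i.isLt j.isLt hij))
    (fun i ↦ by rw [hF, pow_right_comm, hζ.pow_eq_one, one_pow])
  have hweights := hmds.setOf_hammingNorm_eq_Icc <| by
    rw [ENat.card_eq_coe_fintype_card, hF]
    exact_mod_cast hq5
  simpa only [mem_dualCode_iff, hwt_eq_hammingNorm, Fintype.card_fin] using hweights
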